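/- arXiv:1202.2891 — 2 statements merged into one kernel-verified Lean document; each statement's English description precedes it below -/
import Mathlib

section
/- Let k be a finite field with q elements and K an algebraic closure of k. Let M be a free ℤ-module of finite rank with a ℤ-linear automorphism φ, and suppose M decomposes as a finite direct sum M = ⊕ᵢ Mᵢ of φ-invariant submodules such that each (Mᵢ, φ|_{Mᵢ}) is principal with generator χᵢ. Let fᵢ ∈ ℤ[x] be the characteristic polynomial of φ restricted to Mᵢ. Then the map e ↦ (e(χᵢ))ᵢ is a group isomorphism from the group G(M, φ) of q-Frobenius characters of (M, φ) onto the direct product ∏ᵢ {ω ∈ Kˣ : ω^{fᵢ(q)} = 1}. -/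
/-- The group of `q`-Frobenius characters of `(M, φ)`: group homomorphisms `e` from the
additive group `M` to the multiplicative group `Kˣ` satisfying `e (φ m) = e m ^ q`,
as a subgroup of the group `M → Kˣ` under pointwise multiplication. -/
def frobeniusCharGroup {M : Type*} [AddCommGroup M]
    (K : Type*) [Field K] (q : ℕ) (φ : M ≃ₗ[ℤ] M) : Subgroup (M → Kˣ) where
  carrier := {e | (∀ a b, e (a + b) = e a * e b) ∧ ∀ m, e (φ m) = e m ^ q}
  mul_mem' := by
    rintro a b ⟨ha1, ha2⟩ ⟨hb1, hb2⟩
    refine ⟨fun x y => ?_, fun m => ?_⟩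
    · simp only [Pi.mul_apply, ha1 x y, hb1 x y]
      exact mul_mul_mul_comm _ _ _ _
    · simp only [Pi.mul_apply, ha2 m, hb2 m, mul_pow]
  one_mem' := ⟨fun _ _ => (one_mul 1).symm, fun _ => (one_pow q).symm⟩
  inv_mem' := by
    rintro a ⟨ha1, ha2⟩
    refine ⟨fun x y => ?_, fun m => ?_⟩
    · simp only [Pi.inv_apply, ha1 x y, mul_inv]
    · simp only [Pi.inv_apply, ha2 m, inv_pow]

/-- The group `{ω ∈ Kˣ : ω ^ n = 1}` of `n`-th roots of unity in `K`, for `n : ℤ`. -/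
def zpowOneSubgroup (K : Type*) [Field K] (n : ℤ) : Subgroup Kˣ where
  carrier := {ω | ω ^ n = 1}
  mul_mem' := by
    intro a b ha hb
    simp only [Set.mem_setOf_eq] at *
    rw [mul_zpow, ha, hb, one_mul]
  one_mem' := one_zpow n
  inv_mem' := by
    intro a ha
    simp only [Set.mem_setOf_eq] at *
    rw [inv_zpow, ha, inv_one]

/-!
Regard `M` as a `ℤ[X]`-module with `X` acting as `φ`. A `q`-Frobenius character is an additive map
`E` from `M` to `Kˣ` written additively with `E (φ m) = q • E m`, that is, a `ℤ[X]`-linear map when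
`X` acts on the target as multiplication by `q`. As `N i` is finitely generated, nonnegative powers
of `φ` already suffice to generate it from `χ i`, so `g ↦ g(φ) (χ i)` is a surjection
`ℤ[X] → N i`. Its kernel is generated by `f i`: Cayley–Hamilton shows that `f i` lies in the kernel,
and the induced map `ℤ[X] / (f i) → N i` is a surjection between free modules of the same rank,
hence injective. So `ℤ[X]`-linear maps on `N i` correspond to the elements of the target killed by
`f i`, which acts there as multiplication by `(f i)(q)`.
-/

open Polynomial

section Intertwiner

variable {R M B : Type*}

lemma existsUnique_linearMap_comp_subtype_eq [Semiring R] [AddCommMonoid M] [Module R M]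
    [AddCommMonoid B] [Module R B] {ι : Type*} [DecidableEq ι] {N : ι → Submodule R M}
    (hN : DirectSum.IsInternal N) (F : ∀ i, N i →ₗ[R] B) :
    ∃! E : M →ₗ[R] B, ∀ i, E ∘ₗ (N i).subtype = F i := by
  let := hN.chooseDecomposition
  refine ⟨DirectSum.toModule R ι B F ∘ₗ DirectSum.decomposeLinearEquiv N, fun i ↦ ?_,
    fun E hE ↦ ?_⟩
  · ext x
    simp
  · refine DirectSum.decompose_lhom_ext N fun i ↦ ?_
    rw [hE]
    ext x
    simp

lemma zpow_apply_mem_span_range_zpow [Semiring R] [AddCommMonoid M] [Module R M]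
    {φ : M ≃ₗ[R] M} {v x : M} (k : ℤ)
    (hx : x ∈ Submodule.span R (Set.range fun n : ℤ ↦ (φ ^ n) v)) :
    (φ ^ k) x ∈ Submodule.span R (Set.range fun n : ℤ ↦ (φ ^ n) v) := by
  refine (Submodule.span_le.2 ?_ : _ ≤ (Submodule.span R _).comap (φ ^ k).toLinearMap) hx
  rintro _ ⟨n, rfl⟩
  exact Submodule.subset_span ⟨k + n, LinearEquiv.congr_fun (zpow_add φ k n) v⟩

section CommSemiring

variable [CommSemiring R] [AddCommMonoid M] [Module R M] [AddCommMonoid B] [Module R B]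

/-- The linear map `g ↦ g(A) v`, whose range is the cyclic `R[X]`-submodule generated by `v` when
`X` acts as `A`. -/
noncomputable def aevalApply (A : Module.End R M) (v : M) : R[X] →ₗ[R] M :=
  LinearMap.applyₗ v ∘ₗ (aeval A).toLinearMap

@[simp]
lemma aevalApply_apply (A : Module.End R M) (v : M) (g : R[X]) :
    aevalApply A v g = aeval A g v :=
  rfl

lemma map_aeval_apply_of_comp_eq {A : Module.End R M} {A' : Module.End R B} {E : M →ₗ[R] B}
    (h : E ∘ₗ A = A' ∘ₗ E) (g : R[X]) (v : M) : E (aeval A g v) = aeval A' g (E v) := by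
  have comp_pow (n : ℕ) : E ((A ^ n) v) = (A' ^ n) (E v) :=
    (LinearMap.congr_fun (Module.End.commute_pow_left_of_commute h.symm n) v).symm
  induction g using Polynomial.induction_on' with
  | add a b ha hb => simp only [map_add, LinearMap.add_apply, ha, hb]
  | monomial n c =>
    simp only [aeval_monomial, Module.End.mul_apply, Module.algebraMap_end_apply, map_smul,
      comp_pow]

lemma map_aeval_apply_of_comp_eq_smul {A : Module.End R M} {r : R} {E : M →ₗ[R] B}
    (h : E ∘ₗ A = r • E) (g : R[X]) (v : M) : E (aeval A g v) = g.eval r • E v := by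
  rw [map_aeval_apply_of_comp_eq (A' := algebraMap R _ r) h, aeval_algebraMap_apply,
    Module.algebraMap_end_apply, coe_aeval_eq_eval]

lemma eqOn_range_aevalApply {A : Module.End R M} {r : R} {E E' : M →ₗ[R] B}
    (hE : E ∘ₗ A = r • E) (hE' : E' ∘ₗ A = r • E') {v : M} (hv : E v = E' v) :
    Set.EqOn E E' (LinearMap.range (aevalApply A v)) := by
  rintro _ ⟨g, rfl⟩
  rw [aevalApply_apply, map_aeval_apply_of_comp_eq_smul hE, map_aeval_apply_of_comp_eq_smul hE',
    hv]

lemma surjective_aevalApply_restrict {A : Module.End R M} {N : Submodule R M}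
    (hA : ∀ x ∈ N, A x ∈ N) {v : M} (hv : v ∈ N) (hN : N ≤ LinearMap.range (aevalApply A v)) :
    Function.Surjective (aevalApply (A.restrict hA) ⟨v, hv⟩) := by
  intro x
  obtain ⟨g, hg⟩ := hN x.2
  exact ⟨g, Subtype.ext ((map_aeval_apply_of_comp_eq (E := N.subtype) rfl g ⟨v, hv⟩).trans hg)⟩

lemma span_range_zpow_le_range_aevalApply {φ : M ≃ₗ[R] M} {v : M}
    (hfg : (Submodule.span R (Set.range fun n : ℤ ↦ (φ ^ n) v)).FG) :
    Submodule.span R (Set.range fun n : ℤ ↦ (φ ^ n) v) ≤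
      LinearMap.range (aevalApply φ.toLinearMap v) := by
  set S := Submodule.span R (Set.range fun n : ℤ ↦ (φ ^ n) v) with hS
  set W := LinearMap.range (aevalApply φ.toLinearMap v)
  have pow_mem_W (n : ℕ) : (φ ^ n) v ∈ W := by
    refine ⟨X ^ n, ?_⟩
    rw [aevalApply_apply, map_pow, aeval_X, Module.End.pow_apply, LinearEquiv.pow_apply]
    rfl
  obtain ⟨T, hT, hST⟩ := (Submodule.fg_span_iff_fg_span_finset_subset _).1 hfg
  obtain ⟨k, hk⟩ : ∃ k : ℤ, ∀ t ∈ T, (φ ^ k) t ∈ W := by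
    refine ((Filter.eventually_all_finset T).2 fun t ht ↦ ?_ : ∀ᶠ k in Filter.atTop, _).exists
    obtain ⟨n, rfl⟩ := hT ht
    filter_upwards [Filter.eventually_ge_atTop (-n)] with k hk
    obtain ⟨m, hm⟩ := Int.eq_ofNat_of_zero_le (neg_le_iff_add_nonneg.1 hk)
    rw [← LinearEquiv.mul_apply, ← zpow_add, hm]
    exact pow_mem_W m
  -- Since `φ ^ k` permutes `S`, it suffices that it maps the generators in `T` into `W`.
  have S_le : S ≤ W.comap (φ ^ k).toLinearMap := by
    rw [hS, hST]
    exact Submodule.span_le.2 hk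
  intro x hx
  have h := S_le (zpow_apply_mem_span_range_zpow (-k) hx)
  rwa [Submodule.mem_comap, LinearEquiv.coe_coe, ← LinearEquiv.mul_apply, ← zpow_add,
    add_neg_cancel, zpow_zero] at h

end CommSemiring

section CommRing

variable [CommRing R] [AddCommGroup M] [Module R M] [AddCommGroup B] [Module R B]

section Charpoly

variable [Module.Free R M] [Module.Finite R M]

lemma charpoly_eval_smul_apply_eq_zero {A : Module.End R M} {r : R} {E : M →ₗ[R] B}
    (h : E ∘ₗ A = r • E) (v : M) : A.charpoly.eval r • E v = 0 := by
  rw [← map_aeval_apply_of_comp_eq_smul h, LinearMap.aeval_self_charpoly, LinearMap.zero_apply,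
    map_zero]

lemma charpoly_dvd_of_aeval_apply_eq_zero {A : Module.End R M} {v : M}
    (hv : Function.Surjective (aevalApply A v)) {g : R[X]} (hg : aeval A g v = 0) :
    A.charpoly ∣ g := by
  nontriviality R
  have hmonic := A.charpoly_monic
  have mod_mem (p : R[X]) : p %ₘ A.charpoly ∈ degreeLT R (Module.finrank R M) := by
    rw [mem_degreeLT, ← A.charpoly_natDegree, ← degree_eq_natDegree hmonic.ne_zero]
    exact degree_modByMonic_lt p hmonic
  let T : degreeLT R (Module.finrank R M) →ₗ[R] M := (aevalApply A v).domRestrict _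
  have T_mod (p : R[X]) : T ⟨_, mod_mem p⟩ = aeval A p v := by
    rw [A.aeval_eq_aeval_mod_charpoly p]
    rfl
  have hT : Function.Surjective T := fun x ↦
    (hv x).imp' (fun p ↦ ⟨_, mod_mem p⟩) fun p hp ↦ (T_mod p).trans hp
  let j : degreeLT R (Module.finrank R M) ≃ₗ[R] M :=
    degreeLTEquiv R _ ≪≫ₗ (Module.finBasis R M).equivFun.symm
  have hT_inj : Function.Injective T :=
    OrzechProperty.injective_of_surjective_of_injective j.toLinearMap T j.injective hT
  rw [← modByMonic_eq_zero_iff_dvd hmonic]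
  exact congrArg Subtype.val (hT_inj (((T_mod g).trans hg).trans (map_zero T).symm))

lemma exists_comp_eq_smul_of_charpoly_eval_smul_eq_zero {A : Module.End R M} {v : M}
    (hv : Function.Surjective (aevalApply A v)) {r : R} {w : B} (hw : A.charpoly.eval r • w = 0) :
    ∃ E : M →ₗ[R] B, E ∘ₗ A = r • E ∧ E v = w := by
  let evalSmul : R[X] →ₗ[R] B := LinearMap.toSpanSingleton R B w ∘ₗ leval r
  have ker_le : LinearMap.ker (aevalApply A v) ≤ LinearMap.ker evalSmul := by
    intro g hg
    obtain ⟨c, rfl⟩ := charpoly_dvd_of_aeval_apply_eq_zero hv hg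
    simp [evalSmul, mul_comm, mul_smul, hw]
  let E : M →ₗ[R] B := (LinearMap.ker (aevalApply A v)).liftQ evalSmul ker_le ∘ₗ
    ((aevalApply A v).quotKerEquivOfSurjective hv).symm
  have E_apply (g : R[X]) : E (aeval A g v) = g.eval r • w :=
    congrArg _ ((aevalApply A v).quotKerEquivOfSurjective_symm_apply hv g)
  refine ⟨E, LinearMap.ext fun x ↦ ?_, ?_⟩
  · obtain ⟨g, rfl⟩ := hv x
    have h := E_apply (X * g)
    rw [map_mul, aeval_X, Module.End.mul_apply] at h
    simp [h, E_apply, mul_smul]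
  · simpa using E_apply 1

end Charpoly

theorem existsUnique_comp_eq_smul {ι : Type*} [DecidableEq ι] {N : ι → Submodule R M}
    (hN : DirectSum.IsInternal N) [∀ i, Module.Free R (N i)] [∀ i, Module.Finite R (N i)]
    {A : Module.End R M} (hA : ∀ i, ∀ x ∈ N i, A x ∈ N i) {v : ι → M} (hv : ∀ i, v i ∈ N i)
    (hgen : ∀ i, N i ≤ LinearMap.range (aevalApply A (v i))) {r : R} {w : ι → B}
    (hw : ∀ i, (LinearMap.charpoly (A.restrict (hA i))).eval r • w i = 0) :
    ∃! E : M →ₗ[R] B, E ∘ₗ A = r • E ∧ ∀ i, E (v i) = w i := by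
  choose F hF hFv using fun i ↦ exists_comp_eq_smul_of_charpoly_eval_smul_eq_zero
    (surjective_aevalApply_restrict (hA i) (hv i) (hgen i)) (hw i)
  obtain ⟨E, hE, hE_unique⟩ := existsUnique_linearMap_comp_subtype_eq hN F
  have hE_apply (i : ι) (x : N i) : E x = F i x := LinearMap.congr_fun (hE i) x
  have hEv (i : ι) : E (v i) = w i := (hE_apply i ⟨v i, hv i⟩).trans (hFv i)
  have hEA : E ∘ₗ A = r • E := by
    refine (existsUnique_linearMap_comp_subtype_eq hN fun i ↦ r • F i).unique
      (fun i ↦ ?_) fun i ↦ ?_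
    · rw [← hF i]
      ext x
      exact hE_apply i (A.restrict (hA i) x)
    · rw [← hE i, LinearMap.smul_comp]
  refine ⟨E, ⟨hEA, hEv⟩, fun E' ⟨hE'A, hE'v⟩ ↦ hE_unique E' fun i ↦ LinearMap.ext fun x ↦ ?_⟩
  exact (eqOn_range_aevalApply hE'A hEA ((hE'v i).trans (hEv i).symm) (hgen i x.2)).trans
    (hE_apply i x)

end CommRing

end Intertwiner

namespace frobeniusCharGroup

variable {M K : Type*} [AddCommGroup M] [Field K] {q : ℕ} {φ : M ≃ₗ[ℤ] M}

/-- A `q`-Frobenius character as a `ℤ`-linear map into `Kˣ` written additively, which turns the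
Frobenius condition into `E ∘ₗ φ = q • E`. -/
def equivLinearMap : frobeniusCharGroup K q φ ≃
    {E : M →ₗ[ℤ] Additive Kˣ // E ∘ₗ φ.toLinearMap = (q : ℤ) • E} where
  toFun e := ⟨(AddMonoidHom.mk' (fun m ↦ Additive.ofMul (e.1 m)) e.2.1).toIntLinearMap,
    LinearMap.ext fun m ↦ (e.2.2 m).trans (zpow_natCast _ q).symm⟩
  invFun E := ⟨fun m ↦ (E.1 m).toMul, map_add E.1,
    fun m ↦ (LinearMap.congr_fun E.2 m).trans (zpow_natCast (E.1 m).toMul q)⟩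
  left_inv _ := rfl
  right_inv _ := rfl

lemma apply_mem_zpowOneSubgroup {N : Submodule ℤ M} [Module.Free ℤ N] [Module.Finite ℤ N]
    (hN : ∀ x ∈ N, φ x ∈ N) (e : frobeniusCharGroup K q φ) {x : M} (hx : x ∈ N) :
    (e : M → Kˣ) x ∈
      zpowOneSubgroup K ((LinearMap.charpoly (φ.toLinearMap.restrict hN)).eval (q : ℤ)) :=
  let E := equivLinearMap e
  charpoly_eval_smul_apply_eq_zero (A := φ.toLinearMap.restrict hN) (E := E.1 ∘ₗ N.subtype)
    (LinearMap.ext fun y ↦ LinearMap.congr_fun E.2 (y : M)) ⟨x, hx⟩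

/-- The homomorphism `e ↦ (e (χ i))ᵢ` evaluating `q`-Frobenius characters at a family `χ`. -/
def evalHom {ι : Type*} (χ : ι → M) (n : ι → ℤ)
    (h : ∀ (e : frobeniusCharGroup K q φ) i, (e : M → Kˣ) (χ i) ∈ zpowOneSubgroup K (n i)) :
    frobeniusCharGroup K q φ →* ∀ i, zpowOneSubgroup K (n i) where
  toFun e i := ⟨(e : M → Kˣ) (χ i), h e i⟩
  map_one' := rfl
  map_mul' _ _ := rfl

end frobeniusCharGroup

theorem frobeniusCharGroup_equiv_pi_rootsOfUnity_general
    (K : Type*) [Field K] (q : ℕ) {M : Type*} [AddCommGroup M] (φ : M ≃ₗ[ℤ] M)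
    {ι : Type*} [DecidableEq ι] (N : ι → Submodule ℤ M)
    [∀ i, Module.Free ℤ (N i)] [∀ i, Module.Finite ℤ (N i)]
    (hdecomp : DirectSum.IsInternal N) (hinv : ∀ i, ∀ x ∈ N i, φ x ∈ N i) (χ : ι → M)
    (hχ : ∀ i, Submodule.span ℤ (Set.range fun n : ℤ ↦ (φ ^ n) (χ i)) = N i)
    (f : ι → ℤ[X]) (hf : ∀ i, f i = LinearMap.charpoly (φ.toLinearMap.restrict (hinv i))) :
    ∃ ψ : frobeniusCharGroup K q φ ≃* (∀ i, zpowOneSubgroup K ((f i).eval (q : ℤ))),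
      ∀ (e : frobeniusCharGroup K q φ) (i : ι), (ψ e i : Kˣ) = (e : M → Kˣ) (χ i) := by
  obtain rfl : f = _ := funext hf
  have χ_mem (i : ι) : χ i ∈ N i := hχ i ▸ Submodule.subset_span ⟨0, rfl⟩
  have N_le_range (i : ι) : N i ≤ LinearMap.range (aevalApply φ.toLinearMap (χ i)) :=
    (hχ i).ge.trans (span_range_zpow_le_range_aevalApply
      ((hχ i).symm ▸ Module.Finite.iff_fg.1 inferInstance))
  let F := frobeniusCharGroup.evalHom χ _ fun (e : frobeniusCharGroup K q φ) i ↦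
    frobeniusCharGroup.apply_mem_zpowOneSubgroup (hinv i) e (χ_mem i)
  refine ⟨MulEquiv.ofBijective F ((Function.bijective_iff_existsUnique F).2 fun ω ↦ ?_),
    fun _ _ ↦ rfl⟩
  obtain ⟨E, ⟨hEφ, hEχ⟩, hE_unique⟩ := existsUnique_comp_eq_smul hdecomp hinv χ_mem N_le_range
    (w := fun i ↦ Additive.ofMul (ω i : Kˣ)) fun i ↦ (ω i).2
  refine ⟨frobeniusCharGroup.equivLinearMap.symm ⟨E, hEφ⟩, ?_, fun e he ↦ ?_⟩
  · funext i
    exact Subtype.ext (hEχ i)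
  · rw [Equiv.eq_symm_apply]
    refine Subtype.ext (hE_unique _ ⟨(frobeniusCharGroup.equivLinearMap e).2, fun i ↦ ?_⟩)
    exact congrArg Subtype.val (congrFun he i)

/-- Let `k` be a finite field with `q` elements and `K` an algebraic closure of `k`.
Let `M` be a free `ℤ`-module of finite rank with a `ℤ`-linear automorphism `φ`, and
suppose `M` is the internal direct sum of `φ`-invariant submodules `N i`, each principal
with generator `χ i`.  Let `f i` be the characteristic polynomial of `φ` restricted to
`N i`.  Then `e ↦ (e (χ i))ᵢ` is a group isomorphism from the group of `q`-Frobenius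
characters of `(M, φ)` onto the product of the groups of `fᵢ(q)`-th roots of unity in `K`. -/
theorem frobeniusCharGroup_equiv_pi_rootsOfUnity
    (k : Type*) [Field k] [Fintype k] (K : Type*) [Field K] [Algebra k K] [IsAlgClosure k K]
    (q : ℕ) (hq : Fintype.card k = q)
    (M : Type*) [AddCommGroup M] [Module.Free ℤ M] [Module.Finite ℤ M]
    (φ : M ≃ₗ[ℤ] M)
    (ι : Type*) [Fintype ι] [DecidableEq ι] (N : ι → Submodule ℤ M)
    (hdecomp : DirectSum.IsInternal N)
    (hinv : ∀ i, ∀ x ∈ N i, φ x ∈ N i)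
    (χ : ι → M) (hχmem : ∀ i, χ i ∈ N i)
    (hχ : ∀ i, Submodule.span ℤ (Set.range fun n : ℤ => (φ ^ n) (χ i)) = N i)
    (f : ι → Polynomial ℤ)
    (hf : ∀ i, f i = LinearMap.charpoly (φ.toLinearMap.restrict (hinv i))) :
    ∃ ψ : frobeniusCharGroup K q φ ≃* (∀ i, zpowOneSubgroup K ((f i).eval (q : ℤ))),
      ∀ (e : frobeniusCharGroup K q φ) (i : ι), (ψ e i : Kˣ) = (e : M → Kˣ) (χ i) :=
  frobeniusCharGroup_equiv_pi_rootsOfUnity_general K q φ N hdecomp hinv χ hχ f hf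
end

section
/- Let k be a finite field with q elements and K an algebraic closure of k. Let M be a free ℤ-module of finite rank with a ℤ-linear automorphism φ, and suppose M decomposes as a finite direct sum of φ-invariant submodules each of which is principal for φ. Let f ∈ ℤ[x] be the characteristic polynomial of φ. Then the group G(M, φ) of q-Frobenius characters of (M, φ) is finite of cardinality |f(q)|, the absolute value of f evaluated at q. -/
/-!
A `q`-Frobenius character is a homomorphism `M → Kˣ` killing `(q - φ) M`, so `G(M, φ)` is the dual
of `M / (q - φ) M`, a group of order `|det (q - φ)| = |f(q)|`. Since `φ` is invertible, `f(0)` is a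
unit, hence `f(q)` is prime to `q` and therefore nonzero in `K`, where `q = 0`. Thus `K` contains
enough roots of unity for the finite group `M / (q - φ) M` to have as many characters as elements.
-/

theorem isCoprime_charpoly_eval {R M : Type*} [CommRing R] [AddCommGroup M] [Module R M]
    [Module.Free R M] [Module.Finite R M] (φ : M ≃ₗ[R] M) (r : R) :
    IsCoprime (φ.toLinearMap.charpoly.eval r) r := by
  have eval_zero_isUnit : IsUnit (φ.toLinearMap.charpoly.eval 0) := by
    rw [LinearMap.eval_charpoly, map_zero, zero_sub]
    exact LinearMap.isUnit_det _ ((Module.End.isUnit_iff _).2 φ.bijective).neg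
  obtain ⟨c, hc⟩ := Polynomial.sub_dvd_eval_sub r 0 φ.toLinearMap.charpoly
  rw [sub_zero, sub_eq_iff_eq_add'] at hc
  rw [hc, IsCoprime.add_mul_left_left_iff]
  exact isCoprime_one_left.of_isCoprime_of_dvd_left eval_zero_isUnit.dvd

theorem isUnit_natCast_natAbs_charpoly_eval {M : Type*} [AddCommGroup M] [Module.Free ℤ M]
    [Module.Finite ℤ M] (φ : M ≃ₗ[ℤ] M) {R : Type*} [CommRing R] {q : ℕ} (hq : (q : R) = 0) :
    IsUnit ((φ.toLinearMap.charpoly.eval (q : ℤ)).natAbs : R) := by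
  have coprime : (φ.toLinearMap.charpoly.eval (q : ℤ)).natAbs.Coprime q :=
    Int.isCoprime_iff_gcd_eq_one.1 (isCoprime_charpoly_eval φ (q : ℤ))
  simpa only [hq, isCoprime_zero_right] using coprime.cast (R := R)

theorem natCard_quotient_range_eq_natAbs_det {M : Type*} [AddCommGroup M] [Module.Free ℤ M]
    [Module.Finite ℤ M] (f : M →ₗ[ℤ] M) :
    Nat.card (M ⧸ LinearMap.range f) = (LinearMap.det f).natAbs := by
  by_cases hker : LinearMap.ker f = ⊥
  · exact (Submodule.natAbs_det_equiv _
      (LinearEquiv.ofInjective f (LinearMap.ker_eq_bot.1 hker))).symm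
  · have not_finite : ¬ Finite (M ⧸ LinearMap.range f) := fun hfin => hker <| by
      have rank_range := (Submodule.finiteQuotient_iff _).1 hfin
      have rank_quotient_ker := f.quotKerEquivRange.finrank_eq
      have rank_nullity := (LinearMap.ker f).finrank_quotient_add_finrank
      rw [rank_quotient_ker, rank_range, Nat.add_eq_left] at rank_nullity
      exact Submodule.finrank_eq_zero.1 rank_nullity
    rw [LinearMap.det_eq_zero_iff_ker_ne_bot.2 hker, Int.natAbs_zero, Nat.card_eq_zero]
    exact .inr (not_finite_iff_infinite.1 not_finite)

theorem natCard_monoidHom_multiplicative {A R : Type*} [AddCommGroup A] [Finite A] [CommMonoid R]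
    [HasEnoughRootsOfUnity R (Nat.card A)] :
    Nat.card (Multiplicative A →* Rˣ) = Nat.card A := by
  have : HasEnoughRootsOfUnity R (Monoid.exponent (Multiplicative A)) :=
    HasEnoughRootsOfUnity.of_dvd (n := Nat.card A) R Group.exponent_dvd_nat_card
  exact CommGroup.card_monoidHom_of_hasEnoughRootsOfUnity (Multiplicative A) R

section FrobeniusRelations

variable {M : Type*} [AddCommGroup M]

/-- The submodule `(q - φ) M`: the relations satisfied by every `q`-Frobenius character of `(M, φ)`,
so that such characters are the characters of the quotient. -/
def frobeniusRelations (q : ℕ) (φ : M →ₗ[ℤ] M) : Submodule ℤ M :=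
  LinearMap.range (algebraMap ℤ (Module.End ℤ M) q - φ)

theorem mem_frobeniusRelations {q : ℕ} {φ : M →ₗ[ℤ] M} {x : M} :
    x ∈ frobeniusRelations q φ ↔ ∃ m, q • m - φ m = x := by
  simp [frobeniusRelations]

theorem natCard_quotient_frobeniusRelations [Module.Free ℤ M] [Module.Finite ℤ M] (q : ℕ)
    (φ : M →ₗ[ℤ] M) :
    Nat.card (M ⧸ frobeniusRelations q φ) = (φ.charpoly.eval (q : ℤ)).natAbs := by
  rw [LinearMap.eval_charpoly]
  exact natCard_quotient_range_eq_natAbs_det _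

end FrobeniusRelations

namespace frobeniusCharGroup

variable {M : Type*} [AddCommGroup M] {K : Type*} [Field K] {q : ℕ} {φ : M ≃ₗ[ℤ] M}

/-- A Frobenius character as a homomorphism of additive groups, with `Kˣ` written additively. -/
def toAddMonoidHom (e : frobeniusCharGroup K q φ) : M →+ Additive Kˣ :=
  AddMonoidHom.mk' (fun m => .ofMul (e.1 m)) e.2.1

theorem frobeniusRelations_le_ker (e : frobeniusCharGroup K q φ) :
    frobeniusRelations q φ.toLinearMap ≤ LinearMap.ker (toAddMonoidHom e).toIntLinearMap := by
  intro x hx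
  obtain ⟨m, rfl⟩ := mem_frobeniusRelations.1 hx
  have frobenius_apply : toAddMonoidHom e (φ m) = q • toAddMonoidHom e m := e.2.2 m
  rw [LinearMap.mem_ker, AddMonoidHom.coe_toIntLinearMap, map_sub, map_nsmul,
    LinearEquiv.coe_coe, frobenius_apply, sub_self]

/-- A character of `M / (q - φ) M`, composed with the projection, is a Frobenius character. -/
def ofQuotient (g : Multiplicative (M ⧸ frobeniusRelations q φ.toLinearMap) →* Kˣ) :
    frobeniusCharGroup K q φ where
  val m := g (.ofAdd (Submodule.Quotient.mk m))
  property := by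
    refine ⟨fun a b => by simp only [Submodule.Quotient.mk_add, ofAdd_add, map_mul], fun m => ?_⟩
    have mk_frobenius : (Submodule.Quotient.mk (φ m) : M ⧸ frobeniusRelations q φ.toLinearMap)
        = q • Submodule.Quotient.mk m :=
      ((Submodule.Quotient.eq _).2 (mem_frobeniusRelations.2 ⟨m, rfl⟩)).symm
    simp only [mk_frobenius, ofAdd_nsmul, map_pow]

/-- The group of `q`-Frobenius characters of `(M, φ)` is the dual of `M / (q - φ) M`. The quotient
is written multiplicatively, so that its dual is a type of monoid homomorphisms. -/
def equivQuotientDual :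
    frobeniusCharGroup K q φ ≃*
      (Multiplicative (M ⧸ frobeniusRelations q φ.toLinearMap) →* Kˣ) where
  toFun e := AddMonoidHom.toMultiplicativeLeft
    ((frobeniusRelations q φ.toLinearMap).liftQ _ (frobeniusRelations_le_ker e)).toAddMonoidHom
  invFun := ofQuotient
  left_inv _ := rfl
  right_inv g := by
    refine MonoidHom.ext fun x => ?_
    obtain ⟨m, rfl⟩ := Submodule.Quotient.mk_surjective _ x.toAdd
    rfl
  map_mul' e e' := by
    refine MonoidHom.ext fun x => ?_
    obtain ⟨m, rfl⟩ := Submodule.Quotient.mk_surjective _ x.toAdd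
    rfl

end frobeniusCharGroup

theorem card_frobeniusCharGroup_eq_charpoly_eval_general {M : Type*} [AddCommGroup M]
    [Module.Free ℤ M] [Module.Finite ℤ M] (K : Type*) [Field K] (q : ℕ) (φ : M ≃ₗ[ℤ] M)
    (f : Polynomial ℤ) (hf : f = LinearMap.charpoly φ.toLinearMap) (hfq : f.eval (q : ℤ) ≠ 0)
    [HasEnoughRootsOfUnity K (f.eval (q : ℤ)).natAbs] :
    Finite (frobeniusCharGroup K q φ) ∧
      Nat.card (frobeniusCharGroup K q φ) = (f.eval (q : ℤ)).natAbs := by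
  have card_quotient :
      Nat.card (M ⧸ frobeniusRelations q φ.toLinearMap) = (f.eval (q : ℤ)).natAbs := by
    rw [hf, natCard_quotient_frobeniusRelations]
  have card_ne_zero := Int.natAbs_ne_zero.2 hfq
  have : Finite (M ⧸ frobeniusRelations q φ.toLinearMap) :=
    Nat.finite_of_card_ne_zero (card_quotient ▸ card_ne_zero)
  have : HasEnoughRootsOfUnity K (Nat.card (M ⧸ frobeniusRelations q φ.toLinearMap)) := by
    rwa [card_quotient]
  have card_characters : Nat.card (frobeniusCharGroup K q φ) = (f.eval (q : ℤ)).natAbs :=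
    calc
      _ = Nat.card (Multiplicative (M ⧸ frobeniusRelations q φ.toLinearMap) →* Kˣ) :=
        Nat.card_congr frobeniusCharGroup.equivQuotientDual.toEquiv
      _ = Nat.card (M ⧸ frobeniusRelations q φ.toLinearMap) := natCard_monoidHom_multiplicative
      _ = (f.eval (q : ℤ)).natAbs := card_quotient
  exact ⟨Nat.finite_of_card_ne_zero (card_characters ▸ card_ne_zero), card_characters⟩

/-- Let `k` be a finite field with `q` elements and `K` an algebraic closure of `k`.
Let `M` be a free `ℤ`-module of finite rank with a `ℤ`-linear automorphism `φ`, and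
suppose `M` is the internal direct sum of `φ`-invariant submodules each of which is
principal for `φ`.  Let `f` be the characteristic polynomial of `φ`.  Then the group of
`q`-Frobenius characters of `(M, φ)` is finite of cardinality `|f(q)|`. -/
theorem card_frobeniusCharGroup_eq_charpoly_eval
    (k : Type*) [Field k] [Fintype k] (K : Type*) [Field K] [Algebra k K] [IsAlgClosure k K]
    (q : ℕ) (hq : Fintype.card k = q)
    (M : Type*) [AddCommGroup M] [Module.Free ℤ M] [Module.Finite ℤ M]
    (φ : M ≃ₗ[ℤ] M)
    (ι : Type*) [Fintype ι] [DecidableEq ι] (N : ι → Submodule ℤ M)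
    (hdecomp : DirectSum.IsInternal N)
    (hinv : ∀ i, ∀ x ∈ N i, φ x ∈ N i)
    (hprin : ∀ i, ∃ χ ∈ N i,
      Submodule.span ℤ (Set.range fun n : ℤ => (φ ^ n) χ) = N i)
    (f : Polynomial ℤ) (hf : f = LinearMap.charpoly φ.toLinearMap) :
    Finite (frobeniusCharGroup K q φ) ∧
      Nat.card (frobeniusCharGroup K q φ) = (f.eval (q : ℤ)).natAbs := by
  have : IsAlgClosed K := IsAlgClosure.isAlgClosed k
  have hqK : (q : K) = 0 := by
    rw [← hq, ← map_natCast (algebraMap k K), Nat.cast_card_eq_zero, map_zero]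
  have : NeZero ((f.eval (q : ℤ)).natAbs : K) :=
    ⟨hf ▸ (isUnit_natCast_natAbs_charpoly_eval φ hqK).ne_zero⟩
  have : NeZero (f.eval (q : ℤ)).natAbs := .of_neZero_natCast K
  exact card_frobeniusCharGroup_eq_charpoly_eval_general K q φ f hf
    (Int.natAbs_ne_zero.1 (NeZero.ne _))
end
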